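/- The orthomorphism graph of Z₂ × Z₄ is a disjoint union of 12 cycles of length 4; in particular it is 2-regular with 48 vertices and contains no triangles. -/

import Mathlib

/-- The group `ℤ₂ × ℤ₄` (written additively). -/
abbrev G24 : Type := ZMod 2 × ZMod 4

/-- A normalized orthomorphism: a bijection fixing the identity whose associated
complete mapping `x ↦ -x + θ x` (i.e. `x⁻¹θ(x)` in additive notation) is a bijection. -/
def IsNormOrtho (θ : G24 → G24) : Prop :=
  Function.Bijective θ ∧ θ 0 = 0 ∧ Function.Bijective (fun x => -x + θ x)

/-- Orthogonality of orthomorphisms: `x ↦ θ₁(x)⁻¹θ₂(x)` is a bijection. -/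
def Orthogonal (θ₁ θ₂ : G24 → G24) : Prop :=
  Function.Bijective (fun x => -θ₁ x + θ₂ x)

/-- `A i j θ = {x : order of x is i and order of θ(x) is j}`. -/
def A (i j : ℕ) (θ : G24 → G24) : Set G24 :=
  {x | addOrderOf x = i ∧ addOrderOf (θ x) = j}

/-!
Let `χ` be the character of order two with kernel the Klein four-group `{x | 2 • x = 0}`. Summing
`(1 + χ x) (1 + χ (θ x)) = 1 + χ x + χ (θ x) + χ (-x + θ x)` over the group shows that exactly two
elements of the kernel are mapped into the kernel by an orthomorphism `θ`. One of them is `0`; the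
other is an involution `a` whose image `b = θ a` is an involution too. Put `g = θ b`. The equations
`-x + θ x = a` and `-y + θ y = b` have solutions outside the kernel, and injectivity leaves only
`x ∈ {g, g + b}` and `y = x + a`, which then determines every other value of `θ`. Thus `θ` is one
of `6 * 4 * 2` maps indexed by `(a, b, g, ε)` with `x = g + ε • b`.

Two of these maps can be orthogonal only if they have the same `a`, and stepping along an edge
replaces `b` by `a + b` and `ε` by `ε + 1`, while `g` changes by `0` or `a` in turn; after four
steps the cycle closes.
-/

open Finset SimpleGraph

theorem ncard_setOf_and {α : Type*} (P Q : α → Prop) :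
    {x | P x ∧ Q x}.ncard = {x : Subtype P | Q x}.ncard :=
  (congrArg Set.ncard (Set.inter_comm {x | P x} {x | Q x})).trans
    (Set.ncard_subtype P {x | Q x}).symm

section Characters

variable {α G : Type*} [Fintype α] [AddCommGroup G] [Finite G] {χ : AddChar G ℤ}

theorem sum_addChar_comp_eq_zero (hχ : χ ≠ 0) {f : α → G} (hf : f.Bijective) :
    ∑ x, χ (f x) = 0 := by
  have := Fintype.ofFinite G
  exact (hf.sum_comp χ).trans (AddChar.sum_eq_zero_iff_ne_zero.2 hχ)

theorem four_mul_card_filter_addChar_eq_one (hχ : χ ≠ 0) {f g : α → G} (hf : f.Bijective)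
    (hg : g.Bijective) (hfg : (fun x => -f x + g x).Bijective) :
    4 * #{x | χ (f x) = 1 ∧ χ (g x) = 1} = Fintype.card α := by
  have hsign (y : G) : χ y = 1 ∨ χ y = -1 := Int.isUnit_iff.1 (AddChar.val_isUnit χ y)
  have hterm (x : α) : (if χ (f x) = 1 ∧ χ (g x) = 1 then 4 else 0) =
      1 + χ (f x) + χ (g x) + χ (-f x + g x) := by
    have hmul : χ (g x) = χ (f x) * χ (-f x + g x) := by
      rw [← AddChar.map_add_eq_mul, add_neg_cancel_left]
    rcases hsign (f x) with h | h <;> rcases hsign (g x) with h' | h' <;>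
      rw [h, h'] at hmul <;> simp [h, h'] <;> omega
  zify
  calc (4 * #{x | χ (f x) = 1 ∧ χ (g x) = 1} : ℤ)
      = ∑ x, if χ (f x) = 1 ∧ χ (g x) = 1 then 4 else 0 := by simp [sum_ite, mul_comm]
    _ = ∑ x, (1 + χ (f x) + χ (g x) + χ (-f x + g x)) := sum_congr rfl fun x _ => hterm x
    _ = Fintype.card α := by
      simp [sum_add_distrib, sum_addChar_comp_eq_zero hχ hf, sum_addChar_comp_eq_zero hχ hg,
        sum_addChar_comp_eq_zero hχ hfg]

end Characters

section DisjointCycles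

variable {V ι : Type*} {G : SimpleGraph V} {n : ℕ}

/-- The disjoint union of cycles of length `n` indexed by `ι`. -/
abbrev disjointCycles (ι : Type*) (n : ℕ) : SimpleGraph (ι × Fin n) :=
  (⊥ : SimpleGraph ι).boxProd (cycleGraph n)

theorem ncard_neighborSet_of_iso_disjointCycles (φ : G ≃g disjointCycles ι (n + 3)) (v : V) :
    (G.neighborSet v).ncard = 2 := by
  have himage : φ '' G.neighborSet v =
      Prod.mk (φ v).1 '' (cycleGraph (n + 3)).neighborSet (φ v).2 := by
    ext ⟨i, t⟩
    obtain ⟨w, hw⟩ := φ.surjective (i, t)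
    rw [← hw, φ.injective.mem_set_image, mem_neighborSet, ← φ.map_adj_iff, boxProd_adj, hw]
    simp [and_comm, eq_comm]
  rw [← Set.ncard_image_of_injective _ φ.injective, himage,
    Set.ncard_image_of_injective _ (Prod.mk_right_injective _), ← Nat.card_coe_set_eq,
    Nat.card_eq_fintype_card, card_neighborSet_eq_degree, cycleGraph_degree_three_le]

theorem cliqueFree_three_of_iso_disjointCycles (hn : Even n) (φ : G ≃g disjointCycles ι n) :
    G.CliqueFree 3 := by
  let proj : disjointCycles ι n →g cycleGraph n :=
    ⟨Prod.snd, fun h => (boxProd_adj.1 h).elim (fun h => h.1.elim) And.left⟩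
  have hcol := (cycleGraph.bicoloring_of_even n hn).colorable
  exact (hcol.of_hom (proj.comp φ.toHom)).cliqueFree (by simp)

theorem ncard_reachable_of_iso_disjointCycles (φ : G ≃g disjointCycles ι n) (v : V) :
    {w | G.Reachable v w}.ncard = n := by
  have himage : φ '' {w | G.Reachable v w} = Set.range (Prod.mk (φ v).1) := by
    ext ⟨i, t⟩
    obtain ⟨w, hw⟩ := φ.surjective (i, t)
    rw [← hw, φ.injective.mem_set_image, Set.mem_ofPred_eq, ← φ.reachable_iff, reachable_boxProd,
      reachable_bot, hw]
    simp [cycleGraph_preconnected _ _]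
  rw [← Set.ncard_image_of_injective _ φ.injective, himage, ← Set.image_univ,
    Set.ncard_image_of_injective _ (Prod.mk_right_injective _), Set.ncard_univ, Nat.card_fin]

end DisjointCycles

/-- The orthomorphism graph of `ℤ₂ × ℤ₄`. -/
def orthomorphismGraph : SimpleGraph {θ : G24 → G24 // IsNormOrtho θ} where
  Adj θ ψ := Orthogonal θ ψ
  symm := ⟨fun θ ψ h => by
    simpa [Orthogonal, Function.comp_def] using (neg_involutive.bijective (α := G24)).comp h⟩
  loopless := ⟨fun θ h => absurd (@h.1 0 1 (by simp)) (by decide)⟩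

theorem reachable_orthomorphismGraph_iff {θ ψ : {θ : G24 → G24 // IsNormOrtho θ}} :
    orthomorphismGraph.Reachable θ ψ ↔ Relation.ReflTransGen
      (fun f g => IsNormOrtho f ∧ IsNormOrtho g ∧ Orthogonal f g) θ ψ := by
  rw [reachable_iff_reflTransGen]
  refine ⟨fun h => h.lift _ fun f g hfg => ⟨f.2, g.2, hfg⟩, fun h => ?_⟩
  obtain ⟨ψ, hψ⟩ := ψ
  dsimp only at h
  induction h with
  | refl => exact .refl
  | tail _ hstep ih => exact (ih hstep.1).tail hstep.2.2

/-- The character of order two of `ℤ₂ × ℤ₄` whose kernel is the Klein four-group of elements of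
order at most two. -/
def signChar : AddChar G24 ℤ where
  toFun x := if 2 • x = 0 then 1 else -1
  map_zero_eq_one' := by decide
  map_add_eq_mul' := by decide

theorem signChar_ne_zero : signChar ≠ 0 :=
  fun h => absurd (DFunLike.congr_fun h (0, 1)) (by decide)

theorem signChar_eq_one_iff {x : G24} : signChar x = 1 ↔ 2 • x = 0 := by
  simp [signChar]

/-- Two distinct involutions `a`, `b` of `ℤ₂ × ℤ₄`; the third one is then `a + b`. -/
structure InvolutionPair (a b : G24) : Prop where
  two_nsmul_left : 2 • a = 0
  two_nsmul_right : 2 • b = 0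
  left_ne_zero : a ≠ 0
  right_ne_zero : b ≠ 0
  ne : a ≠ b

theorem InvolutionPair.add_ne_zero {a b : G24} (hab : InvolutionPair a b) : a + b ≠ 0 := fun h =>
  hab.ne (add_right_cancel (h.trans (two_nsmul b ▸ hab.two_nsmul_right).symm))

instance (a b : G24) : Decidable (InvolutionPair a b) :=
  decidable_of_iff (2 • a = 0 ∧ 2 • b = 0 ∧ a ≠ 0 ∧ b ≠ 0 ∧ a ≠ b)
    ⟨fun ⟨h₁, h₂, h₃, h₄, h₅⟩ => ⟨h₁, h₂, h₃, h₄, h₅⟩,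
      fun ⟨h₁, h₂, h₃, h₄, h₅⟩ => ⟨h₁, h₂, h₃, h₄, h₅⟩⟩

-- The elements with `2 • x ≠ 0` form the coset `p + {0, a, b, a + b}`. If `q = p + a + b`, then `x`
-- and `y` are distinct elements of `{p, q}`, whence `y + b = x + a`. So `q = p + b`, and then
-- `x ∈ {p, q}` and `y ∈ {p + a, q + a}`.
set_option synthInstance.maxSize 1024 in
theorem InvolutionPair.eq_add_of_ne : ∀ {a b : G24}, InvolutionPair a b →
    ∀ {p : G24}, 2 • p ≠ 0 → ∀ {q : G24}, 2 • q ≠ 0 → q ≠ p → q ≠ p + a →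
    ∀ {x : G24}, 2 • x ≠ 0 → x + a ≠ p → x + a ≠ q →
    ∀ {y : G24}, 2 • y ≠ 0 → y + b ≠ p → y + b ≠ q → y ≠ x → y + b ≠ x + a →
    q = p + b ∧ y = x + a ∧ ∃ ε : ZMod 2, x = p + ε.val • b := by
  decide +kernel

theorem mem_A_two_two {θ : G24 → G24} {x : G24} :
    x ∈ A 2 2 θ ↔ (2 • x = 0 ∧ x ≠ 0) ∧ (2 • θ x = 0 ∧ θ x ≠ 0) :=
  and_congr addOrderOf_eq_prime_iff addOrderOf_eq_prime_iff

theorem IsNormOrtho.apply_ne_zero {θ : G24 → G24} (hθ : IsNormOrtho θ) {x : G24} (hx : x ≠ 0) :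
    θ x ≠ 0 :=
  fun h => hx (hθ.1.1 (h.trans hθ.2.1.symm))

theorem IsNormOrtho.exists_A_two_two_eq_singleton {θ : G24 → G24} (hθ : IsNormOrtho θ) :
    ∃ a, A 2 2 θ = {a} := by
  have hcard := four_mul_card_filter_addChar_eq_one signChar_ne_zero Function.bijective_id
    hθ.1 hθ.2.2
  simp only [signChar_eq_one_iff, id] at hcard
  let s : Finset G24 := {x | 2 • x = 0 ∧ 2 • θ x = 0}
  have hs : #s = 2 := Nat.eq_of_mul_eq_mul_left four_pos hcard
  have hs₀ : 0 ∈ s := by simp [s, hθ.2.1]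
  obtain ⟨a, ha⟩ := card_eq_one.1 (show #(s.erase 0) = 1 by rw [card_erase_of_mem hs₀, hs])
  refine ⟨a, ?_⟩
  rw [← coe_singleton, ← ha]
  ext x
  have := hθ.apply_ne_zero (x := x)
  simp only [mem_A_two_two, s, coe_erase, coe_filter_univ, Set.mem_sdiff, Set.mem_ofPred_eq,
    Set.mem_singleton_iff]
  tauto

theorem IsNormOrtho.involutionPair {θ : G24 → G24} (hθ : IsNormOrtho θ) {a : G24}
    (ha : a ∈ A 2 2 θ) : InvolutionPair a (θ a) := by
  obtain ⟨⟨h2a, ha₀⟩, h2b, hb₀⟩ := mem_A_two_two.1 ha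
  exact ⟨h2a, h2b, ha₀, hb₀, fun h => ha₀ (hθ.2.2.1 (by simp [← h, hθ.2.1]))⟩

theorem IsNormOrtho.two_nsmul_apply_ne_zero {θ : G24 → G24} (hθ : IsNormOrtho θ) {a x : G24}
    (hA : A 2 2 θ = {a}) (hx : 2 • x = 0) (hx₀ : x ≠ 0) (hxa : x ≠ a) : 2 • θ x ≠ 0 :=
  fun h => hxa (hA.subset (mem_A_two_two.2 ⟨⟨hx, hx₀⟩, h, hθ.apply_ne_zero hx₀⟩))

theorem IsNormOrtho.two_nsmul_ne_zero_of_apply_eq_add {θ : G24 → G24} (hθ : IsNormOrtho θ)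
    {a x : G24} (hA : A 2 2 θ = {a}) (hx : θ x = x + a ∨ θ x = x + θ a) : 2 • x ≠ 0 := by
  have hab := hθ.involutionPair (hA.superset rfl)
  intro h
  have hθx : 2 • θ x = 0 := by
    rcases hx with hx | hx <;> simp [hx, h, hab.two_nsmul_left, hab.two_nsmul_right]
  have hx₀ : x ≠ 0 := by
    rintro rfl
    simp [hθ.2.1, hab.left_ne_zero.symm, hab.right_ne_zero.symm] at hx
  have hxa : x ≠ a := by
    rintro rfl
    simp [← two_nsmul, hab.two_nsmul_left, hab.right_ne_zero, hab.left_ne_zero] at hx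
  exact hθ.two_nsmul_apply_ne_zero hA h hx₀ hxa hθx

/-- The only candidate for an orthomorphism sending `a` to `b`, `b` to `g`, `a + b` to `g + b`, and
`x = g + ε • b` to `x + a`. The last two values are `a` and `a + b`; the shift `s` puts them in the
order that makes `y ↦ -y + θ y` injective. -/
def orthomorphismOf (a b g : G24) (ε : ZMod 2) (y : G24) : G24 :=
  let x := g + ε.val • b
  let s := if ε = 0 ↔ 2 • g = a + b then 0 else b
  if y = 0 then 0 else if y = a then b
  else if y = b then g else if y = a + b then g + b
  else if y = x then x + a else if y = x + a then x + a + b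
  else if y = x + b then a + s else a + b + s

/-- The three involutions of `ℤ₂ × ℤ₄`, cyclically ordered. -/
def involution : ZMod 3 → G24 := ![(0, 2), (1, 0), (1, 2)]

/-- The orthomorphism at position `t` of the 4-cycle through
`orthomorphismOf a b ((0, 1) + i • b) ε`, where `p = ((k, i, ε), t)`, `a = involution k` and
`b = involution (k + 1)`. -/
def cycleOrthomorphism (p : (ZMod 3 × ZMod 2 × ZMod 2) × Fin 4) : G24 → G24 :=
  let a := involution p.1.1
  let b := involution (p.1.1 + 1)
  orthomorphismOf a (b + p.2.val • a) ((0, 1) + p.1.2.1.val • b + (p.2.val / 2) • a)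
    (p.1.2.2 + p.2.val)

instance (θ : G24 → G24) : Decidable (IsNormOrtho θ) := inferInstanceAs (Decidable (_ ∧ _))

instance (θ ψ : G24 → G24) : Decidable (Orthogonal θ ψ) :=
  inferInstanceAs (Decidable (Function.Bijective _))

theorem isNormOrtho_cycleOrthomorphism : ∀ p, IsNormOrtho (cycleOrthomorphism p) := by
  decide +kernel

theorem cycleOrthomorphism_injective : Function.Injective cycleOrthomorphism := by
  decide +kernel

instance : DecidableRel (disjointCycles (ZMod 3 × ZMod 2 × ZMod 2) 4).Adj :=
  fun _ _ => decidable_of_iff _ boxProd_adj.symm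

theorem orthogonal_cycleOrthomorphism_iff : ∀ p q,
    Orthogonal (cycleOrthomorphism p) (cycleOrthomorphism q) ↔
      (disjointCycles (ZMod 3 × ZMod 2 × ZMod 2) 4).Adj p q := by
  decide +kernel

theorem exists_cycleOrthomorphism_eq_orthomorphismOf : ∀ {a b : G24}, InvolutionPair a b →
    ∀ {g : G24}, 2 • g ≠ 0 → ∀ ε, ∃ p, cycleOrthomorphism p = orthomorphismOf a b g ε := by
  decide +kernel

theorem orthomorphismOf_apply : ∀ {a b : G24}, InvolutionPair a b → ∀ {g : G24}, 2 • g ≠ 0 →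
    ∀ ε : ZMod 2, orthomorphismOf a b g ε 0 = 0 ∧ orthomorphismOf a b g ε a = b ∧
      orthomorphismOf a b g ε b = g ∧ orthomorphismOf a b g ε (a + b) = g + b ∧
      orthomorphismOf a b g ε (g + ε.val • b) = g + ε.val • b + a ∧
      orthomorphismOf a b g ε (g + ε.val • b + a) = g + ε.val • b + a + b := by
  decide +kernel

theorem InvolutionPair.eq_cases : ∀ {a b : G24}, InvolutionPair a b → ∀ {g : G24}, 2 • g ≠ 0 →
    ∀ (ε : ZMod 2) (z : G24), z = 0 ∨ z = a ∨ z = b ∨ z = a + b ∨ z = g + ε.val • b ∨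
      z = g + ε.val • b + a ∨ z = g + ε.val • b + b ∨ z = g + ε.val • b + a + b := by
  decide +kernel

set_option synthInstance.maxSize 1024 in
theorem eq_orthomorphismOf_apply_of_forall_ne : ∀ {a b : G24}, InvolutionPair a b →
    ∀ {g : G24}, 2 • g ≠ 0 → ∀ (ε : ZMod 2) (y : G24),
    y = g + ε.val • b + b ∨ y = g + ε.val • b + a + b → ∀ r : G24,
    (∀ z : G24, z ≠ g + ε.val • b + b → z ≠ g + ε.val • b + a + b →
      r ≠ orthomorphismOf a b g ε z ∧ -y + r ≠ -z + orthomorphismOf a b g ε z) →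
    r = orthomorphismOf a b g ε y := by
  decide +kernel

theorem IsNormOrtho.apply_add_ne {θ : G24 → G24} (hθ : IsNormOrtho θ) {a : G24} (ha : a ≠ 0)
    (b : G24) : θ (a + b) ≠ θ b + a := by
  intro h
  have hdiff : -(a + b) + θ (a + b) = -b + θ b := by rw [h]; abel
  exact ha (by simpa using hθ.2.2.1 hdiff)

theorem IsNormOrtho.exists_apply_eq {θ : G24 → G24} (hθ : IsNormOrtho θ) {a b : G24}
    (hA : A 2 2 θ = {a}) (hb : θ a = b) :
    2 • θ b ≠ 0 ∧ θ (a + b) = θ b + b ∧ ∃ ε : ZMod 2, θ (θ b + ε.val • b) = θ b + ε.val • b + a ∧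
      θ (θ b + ε.val • b + a) = θ b + ε.val • b + a + b := by
  have hab : InvolutionPair a b := hb ▸ hθ.involutionPair (hA.superset rfl)
  have hd (c : G24) : ∃ x, θ x = x + c :=
    (hθ.2.2.2 c).imp fun x hx => by rw [← hx, add_neg_cancel_left]
  obtain ⟨x, hx⟩ := hd a
  obtain ⟨y, hy⟩ := hd b
  have hx₂ : 2 • x ≠ 0 := hθ.two_nsmul_ne_zero_of_apply_eq_add hA (.inl hx)
  have hy₂ : 2 • y ≠ 0 := hθ.two_nsmul_ne_zero_of_apply_eq_add hA (.inr (hb ▸ hy))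
  have hc₂ : 2 • (a + b) = 0 := by simp [hab.two_nsmul_left, hab.two_nsmul_right]
  have hθb : 2 • θ b ≠ 0 :=
    hθ.two_nsmul_apply_ne_zero hA hab.two_nsmul_right hab.right_ne_zero hab.ne.symm
  have hθc : 2 • θ (a + b) ≠ 0 :=
    hθ.two_nsmul_apply_ne_zero hA hc₂ hab.add_ne_zero (by simpa using hab.right_ne_zero)
  have hθ_ne {u v : G24} (hu : 2 • u ≠ 0) (hv : 2 • v = 0) : θ u ≠ θ v :=
    hθ.1.1.ne (by rintro rfl; exact hu hv)
  have hyx : y ≠ x := by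
    rintro rfl
    exact hab.ne (add_left_cancel (hx.symm.trans hy))
  obtain ⟨hθc_eq, rfl, ε, rfl⟩ := hab.eq_add_of_ne hθb hθc
    (hθ.1.1.ne (by simpa using hab.left_ne_zero)) (hθ.apply_add_ne hab.left_ne_zero b)
    hx₂ (hx ▸ hθ_ne hx₂ hab.two_nsmul_right) (hx ▸ hθ_ne hx₂ hc₂)
    hy₂ (hy ▸ hθ_ne hy₂ hab.two_nsmul_right) (hy ▸ hθ_ne hy₂ hc₂)
    hyx (hx ▸ hy ▸ hθ.1.1.ne hyx)
  exact ⟨hθb, hθc_eq, ε, hx, hy⟩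

theorem IsNormOrtho.exists_eq_orthomorphismOf {θ : G24 → G24} (hθ : IsNormOrtho θ) :
    ∃ a b g ε, InvolutionPair a b ∧ 2 • g ≠ 0 ∧ θ = orthomorphismOf a b g ε := by
  obtain ⟨a, hA⟩ := hθ.exists_A_two_two_eq_singleton
  obtain ⟨b, hb⟩ : ∃ b, θ a = b := ⟨_, rfl⟩
  have hab : InvolutionPair a b := hb ▸ hθ.involutionPair (hA.superset rfl)
  obtain ⟨hg, hc, ε, hx, hxa⟩ := hθ.exists_apply_eq hA hb
  refine ⟨a, b, θ b, ε, hab, hg, ?_⟩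
  obtain ⟨h₁, h₂, h₃, h₄, h₅, h₆⟩ := orthomorphismOf_apply hab hg ε
  have hagree (z : G24) (hz : z ≠ θ b + ε.val • b + b) (hz' : z ≠ θ b + ε.val • b + a + b) :
      θ z = orthomorphismOf a b (θ b) ε z := by
    rcases hab.eq_cases hg ε z with h | h | h | h | h | h | h | h
    exacts [h ▸ hθ.2.1.trans h₁.symm, h ▸ hb.trans h₂.symm, h ▸ h₃.symm, h ▸ hc.trans h₄.symm,
      h ▸ hx.trans h₅.symm, h ▸ hxa.trans h₆.symm, (hz h).elim, (hz' h).elim]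
  funext y
  by_cases hy : y = θ b + ε.val • b + b ∨ y = θ b + ε.val • b + a + b
  · refine eq_orthomorphismOf_apply_of_forall_ne hab hg ε y hy _ fun z hz hz' => ?_
    have hyz : y ≠ z := by
      rintro rfl
      exact hy.elim hz hz'
    rw [← hagree z hz hz']
    exact ⟨hθ.1.1.ne hyz, hθ.2.2.1.ne hyz⟩
  · exact hagree y (fun h => hy (.inl h)) fun h => hy (.inr h)

theorem IsNormOrtho.exists_cycleOrthomorphism_eq {θ : G24 → G24} (hθ : IsNormOrtho θ) :
    ∃ p, cycleOrthomorphism p = θ := by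
  obtain ⟨a, b, g, ε, hab, hg, rfl⟩ := hθ.exists_eq_orthomorphismOf
  exact exists_cycleOrthomorphism_eq_orthomorphismOf hab hg ε

/-- The isomorphism of the orthomorphism graph with twelve disjoint cycles of length four that is
inverse to `cycleOrthomorphism`. -/
noncomputable def orthomorphismGraphIso :
    orthomorphismGraph ≃g disjointCycles (ZMod 3 × ZMod 2 × ZMod 2) 4 :=
  RelIso.symm
    { toEquiv := .ofBijective (fun p => ⟨cycleOrthomorphism p, isNormOrtho_cycleOrthomorphism p⟩)
        ⟨fun _ _ h => cycleOrthomorphism_injective (congrArg Subtype.val h),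
          fun θ => θ.2.exists_cycleOrthomorphism_eq.imp fun _ h => Subtype.ext h⟩
      map_rel_iff' := orthogonal_cycleOrthomorphism_iff _ _ }

/-- The orthomorphism graph of `ℤ₂ × ℤ₄` is a disjoint union of 12 cycles of
length 4: it has 48 vertices, is 2-regular, is triangle-free, and every
connected component (under the reflexive-transitive closure of orthogonality
among orthomorphisms) has exactly 4 vertices. -/
theorem ortho_graph_structure :
    {θ : G24 → G24 | IsNormOrtho θ}.ncard = 48 ∧
    (∀ θ : G24 → G24, IsNormOrtho θ →
      {ψ : G24 → G24 | IsNormOrtho ψ ∧ Orthogonal θ ψ}.ncard = 2) ∧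
    (¬ ∃ θ₁ θ₂ θ₃ : G24 → G24, IsNormOrtho θ₁ ∧ IsNormOrtho θ₂ ∧ IsNormOrtho θ₃ ∧
        Orthogonal θ₁ θ₂ ∧ Orthogonal θ₂ θ₃ ∧ Orthogonal θ₁ θ₃) ∧
    (∀ θ : G24 → G24, IsNormOrtho θ →
      {ψ : G24 → G24 | IsNormOrtho ψ ∧
        Relation.ReflTransGen
          (fun f g => IsNormOrtho f ∧ IsNormOrtho g ∧ Orthogonal f g) θ ψ}.ncard = 4) := by
  let φ := orthomorphismGraphIso
  refine ⟨?_, fun θ hθ => ?_, ?_, fun θ hθ => ?_⟩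
  · exact (Nat.card_congr φ.toEquiv).trans (by simp)
  · rw [ncard_setOf_and]
    exact ncard_neighborSet_of_iso_disjointCycles φ ⟨θ, hθ⟩
  · rintro ⟨θ₁, θ₂, θ₃, h₁, h₂, h₃, h₁₂, h₂₃, h₁₃⟩
    have hclique : orthomorphismGraph.Adj ⟨θ₁, h₁⟩ ⟨θ₂, h₂⟩ ∧
      orthomorphismGraph.Adj ⟨θ₁, h₁⟩ ⟨θ₃, h₃⟩ ∧ orthomorphismGraph.Adj ⟨θ₂, h₂⟩ ⟨θ₃, h₃⟩ :=
      ⟨h₁₂, h₁₃, h₂₃⟩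
    exact cliqueFree_three_of_iso_disjointCycles (by decide) φ _ (is3Clique_triple_iff.2 hclique)
  · simp_rw [ncard_setOf_and, ← reachable_orthomorphismGraph_iff (θ := ⟨θ, hθ⟩)]
    exact ncard_reachable_of_iso_disjointCycles φ ⟨θ, hθ⟩
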